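/- Let X ∈ D^k(H)^-. Then for every r ∈ [0,1), ((1−r)/(1+r))^k · I ≤ 𝒫(R, rX) ≤ ((1+r)/(1−r))^k · I in the operator order on ℓ²(ℕ^k; H). -/

import Mathlib

open ContinuousLinearMap

noncomputable section

/-- `ℓ²(ℕ^k; H)`. -/
abbrev L2 (k : ℕ) (H : Type*) [NormedAddCommGroup H] : Type _ :=
  lp (fun _ : Fin k → ℕ => H) 2

variable {k : ℕ} {H : Type*} [NormedAddCommGroup H] [InnerProductSpace ℂ H] [CompleteSpace H]

/-- The Loewner (operator) order: `S ≤ T` iff `T - S` is a positive operator. -/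
def opLE {E : Type*} [NormedAddCommGroup E] [InnerProductSpace ℂ E] [CompleteSpace E]
    (S T : E →L[ℂ] E) : Prop := (T - S).IsPositive

/-- The defect operator `Δ_X(I) = (id - Φ_{X_1}) ∘ ⋯ ∘ (id - Φ_{X_k})(I)`,
where `Φ_{X_i}(Y) = X_i Y X_i*`. -/
def defect (X : Fin k → (H →L[ℂ] H)) : H →L[ℂ] H :=
  ((List.ofFn fun i => fun Y : H →L[ℂ] H => Y - X i * Y * adjoint (X i)).foldr (· ∘ ·) id) 1

/-- Membership in the regular polydisk `D^k(H)`: pairwise commuting operators of norm `< 1`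
with positive invertible defect operator. -/
def memPolydisk (X : Fin k → (H →L[ℂ] H)) : Prop :=
  (∀ i j, Commute (X i) (X j)) ∧ (∀ i, ‖X i‖ < 1) ∧
    (defect X).IsPositive ∧ IsUnit (defect X)

/-- Membership in the closed regular polydisk `D^k(H)⁻`: pairwise commuting contractions `X`
with `rX ∈ D^k(H)` for all `r ∈ (0,1)`. -/
def memClosedPolydisk (X : Fin k → (H →L[ℂ] H)) : Prop :=
  (∀ i j, Commute (X i) (X j)) ∧ (∀ i, ‖X i‖ ≤ 1) ∧
    ∀ r ∈ Set.Ioo (0 : ℝ) 1, memPolydisk (fun i => ((r : ℂ) • X i))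

/-- `P` is the pluriharmonic Poisson kernel `𝒫(R, rX)` on `ℓ²(ℕ^k; H)`: it is characterized by
`⟨𝒫(R,rX)(δ_β h), δ_α ℓ⟩ = r^{Σ|α_i - β_i|} ⟨(∏ X_i^{(β_i-α_i)⁺})(∏ (X_i*)^{(α_i-β_i)⁺}) h, ℓ⟩`. -/
def IsPoissonKernel (X : Fin k → (H →L[ℂ] H)) (r : ℝ)
    (P : L2 k H →L[ℂ] L2 k H) : Prop :=
  ∀ (α β : Fin k → ℕ) (h ℓ : H),
    inner (𝕜 := ℂ) (P (lp.single 2 β h)) (lp.single 2 α ℓ) =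
      ((r ^ (∑ i, ((α i - β i) + (β i - α i))) : ℝ) : ℂ) *
        inner (𝕜 := ℂ)
          (((List.ofFn fun i => X i ^ (β i - α i)).prod *
            (List.ofFn fun i => (adjoint (X i)) ^ (α i - β i)).prod) h) ℓ

/-- The two-sided Harnack-type domination `c⁻² 𝒫(R,rB) ≤ 𝒫(R,rA) ≤ c² 𝒫(R,rB)` for all
`r ∈ [0,1)`, expressed in terms of the Poisson kernel families. -/
def PoissonSandwich (PA PB : ℝ → (L2 k H →L[ℂ] L2 k H)) (c : ℝ) : Prop :=
  ∀ r ∈ Set.Ico (0 : ℝ) 1,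
    opLE (((c : ℂ) ^ 2)⁻¹ • PB r) (PA r) ∧ opLE (PA r) (((c : ℂ) ^ 2) • PB r)

/-- Poisson equivalence of two points, expressed via their Poisson kernel families. -/
def PoissonEquiv (PA PB : ℝ → (L2 k H →L[ℂ] L2 k H)) : Prop :=
  ∃ c : ℝ, 1 ≤ c ∧ PoissonSandwich PA PB c

/-- The Poisson distance `δ_P`, expressed via the Poisson kernel families. -/
def deltaP (PA PB : ℝ → (L2 k H →L[ℂ] L2 k H)) : ℝ :=
  Real.log (sInf {c : ℝ | 1 ≤ c ∧ PoissonSandwich PA PB c})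


open scoped ComplexOrder

/-- positive kernels -/
def PSD {ι : Type*} (K : ι → ι → (H →L[ℂ] H)) : Prop :=
  ∀ (s : Finset ι) (f : ι → H), (0 : ℂ) ≤ ∑ α ∈ s, ∑ β ∈ s, inner ℂ (K α β (f β)) (f α)

theorem PSD.congr_local {ι : Type*} {K : ι → ι → (H →L[ℂ] H)}
    (h : ∀ s : Finset ι, ∃ K', PSD K' ∧ ∀ α ∈ s, ∀ β ∈ s, K α β = K' α β) : PSD K := by
  intro s f
  obtain ⟨K', hK', he⟩ := h s
  refine (hK' s f).trans_eq ?_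
  refine Finset.sum_congr rfl fun α hα => Finset.sum_congr rfl fun β hβ => ?_
  rw [he α hα β hβ]

theorem PSD.add {ι : Type*} {K L : ι → ι → (H →L[ℂ] H)} (hK : PSD K) (hL : PSD L) :
    PSD (fun α β => K α β + L α β) := by
  intro s f
  have := add_nonneg (hK s f) (hL s f)
  simpa [inner_add_left, Finset.sum_add_distrib] using this

theorem PSD.zero {ι : Type*} : PSD (fun _ _ : ι => (0 : H →L[ℂ] H)) := by
  intro s f
  simp

theorem PSD.sum {ι τ : Type*} (T : Finset τ) {K : τ → ι → ι → (H →L[ℂ] H)}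
    (hK : ∀ t ∈ T, PSD (K t)) :
    PSD (fun α β => ∑ t ∈ T, K t α β) := by
  classical
  induction T using Finset.induction_on with
  | empty => simpa using PSD.zero
  | insert a T ha ih =>
    simp only [Finset.sum_insert ha]
    exact (hK a (by simp)).add (ih fun t ht => hK t (by simp [ht]))

theorem PSD.conj {ι : Type*} {K : ι → ι → (H →L[ℂ] H)} (hK : PSD K) (V : ι → (H →L[ℂ] H)) :
    PSD (fun α β => V α * K α β * adjoint (V β)) := by
  intro s f
  have := hK s (fun β => adjoint (V β) (f β))
  simpa [ContinuousLinearMap.adjoint_inner_right] using this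

theorem PSD.const {ι : Type*} {D : H →L[ℂ] H} (hD : ∀ h, (0 : ℂ) ≤ inner ℂ (D h) h) :
    PSD (fun _ _ : ι => D) := by
  intro s f
  have := hD (∑ α ∈ s, f α)
  rw [map_sum, inner_sum] at this
  simpa only [sum_inner] using this

theorem chol (Y G : H →L[ℂ] H) (a b N : ℕ) (h : max a b ≤ N) :
    Y ^ (b - a) * G * adjoint Y ^ (a - b) =
      Y ^ (N - a) * G * adjoint Y ^ (N - b) +
      ∑ m ∈ Finset.range N, (if a ≤ m then Y ^ (m - a) else 0) * (G - Y * G * adjoint Y) *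
        (if b ≤ m then adjoint Y ^ (m - b) else 0) := by
  induction N, h using Nat.le_induction with
  | base =>
    rw [Finset.sum_eq_zero]
    · have h1 : max a b - a = b - a := by omega
      have h2 : max a b - b = a - b := by omega
      rw [h1, h2, add_zero]
    · intro m hm
      rw [Finset.mem_range] at hm
      by_cases ha : a ≤ m
      · have : ¬ b ≤ m := by omega
        simp [this]
      · simp [ha]
  | succ N hN ih =>
    rw [ih, Finset.sum_range_succ]
    have ha : a ≤ N := by omega
    have hb : b ≤ N := by omega
    have h1 : N + 1 - a = (N - a) + 1 := by omega
    have h2 : N + 1 - b = (N - b) + 1 := by omega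
    rw [if_pos ha, if_pos hb, h1, h2, pow_succ, pow_succ']
    noncomm_ring

theorem adj_pow (Y : H →L[ℂ] H) (n : ℕ) : adjoint (Y ^ n) = adjoint Y ^ n := by
  simp only [← ContinuousLinearMap.star_eq_adjoint, star_pow]

theorem PSD.step {k : ℕ} {G : (Fin k → ℕ) → (Fin k → ℕ) → (H →L[ℂ] H)} (Y : H →L[ℂ] H) (i : Fin k)
    (h1 : PSD G) (h2 : PSD (fun α β => G α β - Y * G α β * adjoint Y)) :
    PSD (fun α β => Y ^ (β i - α i) * G α β * adjoint Y ^ (α i - β i)) := by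
  refine PSD.congr_local fun s => ?_
  obtain ⟨N, hN⟩ : ∃ N : ℕ, ∀ α ∈ s, α i ≤ N :=
    ⟨s.sup (fun α => α i), fun α hα => Finset.le_sup (f := fun α : Fin k → ℕ => α i) hα⟩
  refine ⟨_, (h1.conj (fun α => Y ^ (N - α i))).add (PSD.sum (Finset.range N)
    (fun m _ => h2.conj (fun α => if α i ≤ m then Y ^ (m - α i) else 0))), ?_⟩
  intro α hα β hβ
  rw [chol Y (G α β) (α i) (β i) N (max_le (hN α hα) (hN β hβ)), adj_pow]
  congr 1
  refine Finset.sum_congr rfl fun m _ => ?_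
  congr 1
  split_ifs
  · rw [adj_pow]
  · simp

/-- iterated defect -/
def Th {k : ℕ} (Y : Fin k → (H →L[ℂ] H)) : List (Fin k) → (H →L[ℂ] H) → (H →L[ℂ] H)
  | [], D => D
  | i :: l, D => Th Y l D - Y i * Th Y l D * adjoint (Y i)

/-- iterated kernel -/
def Ps {k : ℕ} (Y : Fin k → (H →L[ℂ] H)) (α β : Fin k → ℕ) :
    List (Fin k) → (H →L[ℂ] H) → (H →L[ℂ] H)
  | [], D => D
  | i :: l, D => Y i ^ (β i - α i) * Ps Y α β l D * adjoint (Y i) ^ (α i - β i)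

theorem adj_comm {A B : H →L[ℂ] H} (h : Commute A B) : Commute (adjoint A) (adjoint B) := by
  simp only [← ContinuousLinearMap.star_eq_adjoint]
  exact h.star_star

theorem sand_comm {A B C D E : H →L[ℂ] H} (h : Commute A B) (h' : Commute C D) :
    A * (B * E * C) * D = B * (A * E * D) * C := by
  calc A * (B * E * C) * D = (A * B) * E * (C * D) := by simp only [mul_assoc]
    _ = (B * A) * E * (D * C) := by rw [h.eq, h'.eq]
    _ = _ := by simp only [mul_assoc]

theorem Th_comm {k : ℕ} (Y : Fin k → (H →L[ℂ] H)) (hY : ∀ i j, Commute (Y i) (Y j))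
    (i : Fin k) (l : List (Fin k)) (D : H →L[ℂ] H) :
    Th Y l (D - Y i * D * adjoint (Y i)) = Th Y l D - Y i * Th Y l D * adjoint (Y i) := by
  induction l with
  | nil => rfl
  | cons j l ih =>
    simp only [Th, ih, mul_sub, sub_mul]
    rw [sand_comm (hY i j) (adj_comm (hY j i))]
    abel

theorem Ps_comm {k : ℕ} (Y : Fin k → (H →L[ℂ] H)) (hY : ∀ i j, Commute (Y i) (Y j))
    (α β : Fin k → ℕ) (i : Fin k) (l : List (Fin k)) (D : H →L[ℂ] H) :
    Ps Y α β l (D - Y i * D * adjoint (Y i)) =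
      Ps Y α β l D - Y i * Ps Y α β l D * adjoint (Y i) := by
  induction l with
  | nil => rfl
  | cons j l ih =>
    simp only [Ps, ih, mul_sub, sub_mul]
    rw [sand_comm ((hY j i).pow_left _) ((adj_comm (hY i j)).pow_right _)]

theorem drop_pos {Y D : H →L[ℂ] H} (hY : ‖Y‖ < 1)
    (h : ∀ x, (0 : ℂ) ≤ inner ℂ ((D - Y * D * adjoint Y) x) x) (x : H) :
    (0 : ℂ) ≤ inner ℂ (D x) x := by
  set Z := adjoint Y with hZ
  have h1 : ∀ x, (inner ℂ (D (Z x)) (Z x) : ℂ) ≤ inner ℂ (D x) x := by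
    intro x
    have := h x
    simp only [ContinuousLinearMap.sub_apply, inner_sub_left, sub_nonneg] at this
    simpa [hZ, ContinuousLinearMap.adjoint_inner_right] using this
  have h2 : ∀ n : ℕ, (inner ℂ (D ((Z ^ n) x)) ((Z ^ n) x) : ℂ) ≤ inner ℂ (D x) x := by
    intro n
    induction n with
    | zero => simp
    | succ n ih =>
      refine le_trans ?_ ih
      rw [pow_succ']
      exact h1 _
  have hZn : ‖Z‖ < 1 := by
    rw [hZ]; simpa using hY
  have h3 : Filter.Tendsto (fun n : ℕ => (Z ^ n) x) Filter.atTop (nhds 0) := by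
    have := tendsto_pow_atTop_nhds_zero_of_norm_lt_one hZn
    have h4 := ((ContinuousLinearMap.apply ℂ H x).continuous.tendsto (0 : H →L[ℂ] H)).comp this
    simpa [Function.comp_def] using h4
  have h4 : Filter.Tendsto (fun n : ℕ => (inner ℂ (D ((Z ^ n) x)) ((Z ^ n) x) : ℂ))
      Filter.atTop (nhds 0) := by
    have := ((D.continuous.tendsto 0).comp h3).inner (𝕜 := ℂ) h3
    simpa [Function.comp_def] using this
  exact le_of_tendsto h4 (Filter.Eventually.of_forall h2)

theorem Ps_psd {k : ℕ} (Y : Fin k → (H →L[ℂ] H)) (hY : ∀ i j, Commute (Y i) (Y j))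
    (hn : ∀ i, ‖Y i‖ < 1) (l : List (Fin k)) (D : H →L[ℂ] H)
    (h : ∀ x, (0 : ℂ) ≤ inner ℂ (Th Y l D x) x) : PSD (fun α β => Ps Y α β l D) := by
  induction l generalizing D with
  | nil => exact PSD.const h
  | cons i l ih =>
    refine PSD.step (Y i) i (ih D (drop_pos (hn i) h)) ?_
    have := ih (D - Y i * D * adjoint (Y i)) (by rw [Th_comm Y hY]; exact h)
    simpa only [Ps_comm Y hY] using this

theorem defect_eq {k : ℕ} (Y : Fin k → (H →L[ℂ] H)) : defect Y = Th Y (List.finRange k) 1 := by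
  unfold defect
  rw [List.ofFn_eq_map]
  generalize List.finRange k = l
  induction l with
  | nil => rfl
  | cons i l ih => simp only [Th, ← ih]; rfl

theorem Ps_eq {k : ℕ} (Y : Fin k → (H →L[ℂ] H)) (hY : ∀ i j, Commute (Y i) (Y j))
    (α β : Fin k → ℕ) (l : List (Fin k)) :
    Ps Y α β l 1 = (l.map fun i => Y i ^ (β i - α i)).prod *
      (l.map fun i => adjoint (Y i) ^ (α i - β i)).prod := by
  induction l with
  | nil => simp [Ps]
  | cons i l ih =>
    have : Commute (adjoint (Y i) ^ (α i - β i))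
        (l.map fun i => adjoint (Y i) ^ (α i - β i)).prod := by
      refine Commute.list_prod_right _ _ fun x hx => ?_
      obtain ⟨j, _, rfl⟩ := List.mem_map.1 hx
      exact ((adj_comm (hY i j)).pow_pow _ _)
    simp only [Ps, ih, List.map_cons, List.prod_cons]
    rw [this.eq]
    simp only [mul_assoc]

theorem Ps_smul {k : ℕ} (X : Fin k → (H →L[ℂ] H)) (r : ℝ) (α β : Fin k → ℕ)
    (l : List (Fin k)) (D : H →L[ℂ] H) :
    Ps (fun i => (r : ℂ) • X i) α β l D =
      ((r ^ (l.map fun i => (α i - β i) + (β i - α i)).sum : ℝ) : ℂ) • Ps X α β l D := by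
  induction l with
  | nil => simp [Ps]
  | cons i l ih =>
    simp only [Ps, ih, List.map_cons, List.sum_cons]
    simp only [map_smulₛₗ, smul_pow, Complex.conj_ofReal, smul_mul_assoc, mul_smul_comm, smul_smul]
    congr 1
    push_cast
    ring

theorem ker_psd {k : ℕ} (X : Fin k → (H →L[ℂ] H)) (hX : memClosedPolydisk X) :
    PSD (fun α β => Ps X α β (List.finRange k) 1) := by
  intro s f
  have h1 : ∀ r ∈ Set.Ioo (0 : ℝ) 1, (0 : ℂ) ≤ ∑ α ∈ s, ∑ β ∈ s,
      ((r ^ ((List.finRange k).map fun i => (α i - β i) + (β i - α i)).sum : ℝ) : ℂ) *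
      inner ℂ (Ps X α β (List.finRange k) 1 (f β)) (f α) := by
    intro r hr
    obtain ⟨hc, hn, hp, -⟩ := hX.2.2 r hr
    rw [defect_eq] at hp
    have := Ps_psd _ hc hn (List.finRange k) 1 (fun x => hp.inner_nonneg_left x) s f
    simpa only [Ps_smul, ContinuousLinearMap.smul_apply, inner_smul_left,
      Complex.conj_ofReal] using this
  have h2 : Filter.Tendsto (fun r : ℝ => ∑ α ∈ s, ∑ β ∈ s,
      ((r ^ ((List.finRange k).map fun i => (α i - β i) + (β i - α i)).sum : ℝ) : ℂ) *
      inner ℂ (Ps X α β (List.finRange k) 1 (f β)) (f α)) (nhdsWithin 1 (Set.Ioo 0 1))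
      (nhds (∑ α ∈ s, ∑ β ∈ s, inner ℂ (Ps X α β (List.finRange k) 1 (f β)) (f α))) := by
    have : Continuous (fun r : ℝ => ∑ α ∈ s, ∑ β ∈ s,
      ((r ^ ((List.finRange k).map fun i => (α i - β i) + (β i - α i)).sum : ℝ) : ℂ) *
      inner ℂ (Ps X α β (List.finRange k) 1 (f β)) (f α)) := by fun_prop
    have h := (this.tendsto 1).mono_left (nhdsWithin_le_nhds (s := Set.Ioo 0 1))
    simpa using h
  haveI : (nhdsWithin (1 : ℝ) (Set.Ioo 0 1)).NeBot := by
    rw [nhdsWithin_Ioo_eq_nhdsLT (by norm_num)]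
    infer_instance
  exact ge_of_tendsto h2 (Filter.eventually_of_mem self_mem_nhdsWithin h1)

/-- scalar Schur multipliers preserving positivity -/
def Good (H : Type*) [NormedAddCommGroup H] [InnerProductSpace ℂ H] [CompleteSpace H]
    {ι : Type*} (w : ι → ι → ℝ) : Prop :=
  ∀ K : ι → ι → (H →L[ℂ] H), PSD K → PSD (fun α β => (w α β : ℂ) • K α β)

theorem Good.mul {ι : Type*} {v w : ι → ι → ℝ} (hv : Good H v) (hw : Good H w) :
    Good H (fun α β => v α β * w α β) := by
  intro K hK
  have := hv _ (hw _ hK)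
  simpa only [smul_smul, ← Complex.ofReal_mul] using this

theorem Good.add {ι : Type*} {v w : ι → ι → ℝ} (hv : Good H v) (hw : Good H w) :
    Good H (fun α β => v α β + w α β) := by
  intro K hK
  have := (hv _ hK).add (hw _ hK)
  simpa [add_smul] using this

theorem Good.of_sum {ι : Type*} {w : ι → ι → ℝ}
    (h : ∀ s : Finset ι, ∃ (N : ℕ) (u : ℕ → ι → ℝ), ∀ α ∈ s, ∀ β ∈ s,
      w α β = ∑ m ∈ Finset.range N, u m α * u m β) : Good H w := by
  intro K hK
  refine PSD.congr_local fun s => ?_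
  obtain ⟨N, u, hu⟩ := h s
  refine ⟨_, PSD.sum (Finset.range N) (fun m _ => hK.conj (fun α => (u m α : ℂ) • 1)), ?_⟩
  intro α hα β hβ
  rw [hu α hα β hβ]
  push_cast
  rw [Finset.sum_smul]
  refine Finset.sum_congr rfl fun m _ => ?_
  simp only [map_smulₛₗ, Complex.conj_ofReal, smul_mul_assoc, mul_smul_comm, smul_smul,
    ← ContinuousLinearMap.star_eq_adjoint, star_one, one_mul, mul_one]
  congr 1
  ring

theorem Good.rank {ι : Type*} (u : ι → ℝ) : Good H (fun α β => u α * u β) :=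
  Good.of_sum fun _ => ⟨1, fun _ => u, by simp⟩

theorem Good.const {ι : Type*} {c : ℝ} (hc : 0 ≤ c) : Good H (fun _ _ : ι => c) := by
  have := Good.rank (H := H) (fun _ : ι => Real.sqrt c)
  simpa [Real.mul_self_sqrt hc] using this

theorem Good.delta {k : ℕ} (i : Fin k) :
    Good H (fun α β : Fin k → ℕ => if α i = β i then (1 : ℝ) else 0) := by
  refine Good.of_sum fun s => ⟨s.sup (fun α => α i) + 1, fun m α => if α i = m then 1 else 0, ?_⟩
  intro α hα β hβ
  beta_reduce
  have := Finset.le_sup (f := fun α : Fin k → ℕ => α i) hα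
  have h2 : α i < s.sup (fun α => α i) + 1 := Nat.lt_succ_of_le this
  rw [Finset.sum_eq_single_of_mem (α i) (Finset.mem_range.2 h2)
    (fun m _ hm => by rw [if_neg hm.symm, zero_mul]), if_pos rfl, one_mul]
  simp only [eq_comm]

/-- coefficients of `(1+z)/(1-rz)` -/
def vv (r : ℝ) : ℕ → ℝ
  | 0 => 1
  | n + 1 => (1 + r) * r ^ n

theorem poisson_id (r : ℝ) (hr : 1 + r ≠ 0) (i j : ℕ) :
    r ^ ((i - j) + (j - i)) - (1 - r) / (1 + r) * (if i = j then 1 else 0) =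
      r * (r ^ i * r ^ j) + r * (1 - r) / (1 + r) *
        ∑ m ∈ Finset.range (min i j + 1), vv r (i - m) * vv r (j - m) := by
  induction i generalizing j with
  | zero =>
    cases j with
    | zero => simp [vv]; field_simp; ring
    | succ j => simp [vv]; field_simp; ring
  | succ i ih =>
    cases j with
    | zero => simp [vv]; field_simp; ring
    | succ j =>
      have h := ih j
      have e1 : min (i + 1) (j + 1) + 1 = (min i j + 1) + 1 := by omega
      rw [e1, Finset.sum_range_succ']
      simp only [Nat.add_sub_add_right, add_left_inj, Nat.sub_zero]
      rw [h]
      simp only [vv]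
      field_simp
      ring

theorem Good.vsum {k : ℕ} (i : Fin k) (v : ℕ → ℝ) : Good H (fun α β : Fin k → ℕ =>
    ∑ m ∈ Finset.range (min (α i) (β i) + 1), v (α i - m) * v (β i - m)) := by
  refine Good.of_sum fun s => ⟨s.sup (fun α => α i) + 1,
    fun m α => if m ≤ α i then v (α i - m) else 0, ?_⟩
  intro α hα β hβ
  beta_reduce
  have : α i ≤ s.sup (fun α => α i) := Finset.le_sup (f := fun α : Fin k → ℕ => α i) hα
  rw [← Finset.sum_subset (Finset.range_mono
    (show min (α i) (β i) + 1 ≤ s.sup (fun α => α i) + 1 by omega))]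
  · refine Finset.sum_congr rfl fun m hm => ?_
    rw [Finset.mem_range] at hm
    rw [if_pos (by omega), if_pos (by omega)]
  · intro m _ hm
    rw [Finset.mem_range] at hm
    by_cases h : m ≤ α i
    · rw [if_neg (show ¬ m ≤ β i by omega), mul_zero]
    · rw [if_neg h, zero_mul]

theorem Good.lower {k : ℕ} (i : Fin k) {r : ℝ} (h0 : 0 ≤ r) (h1 : r < 1) :
    Good H (fun α β : Fin k → ℕ => r ^ ((α i - β i) + (β i - α i)) -
      (1 - r) / (1 + r) * (if α i = β i then 1 else 0)) := by
  have hr : 1 + r ≠ 0 := by linarith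
  simp only [poisson_id r hr]
  have hc : 0 ≤ r * (1 - r) / (1 + r) :=
    div_nonneg (mul_nonneg h0 (by linarith)) (by linarith)
  exact ((Good.const h0).mul (Good.rank fun α : Fin k → ℕ => r ^ α i)).add
    ((Good.const hc).mul (Good.vsum i (vv r)))

theorem sgn_pow_aux (a b : ℕ) (r : ℝ) :
    r ^ ((a - b) + (b - a)) = ((-1) ^ a * (-1) ^ b) * (-r) ^ ((a - b) + (b - a)) := by
  rw [neg_pow r, ← mul_assoc, ← pow_add, ← pow_add, Even.neg_one_pow, one_mul]
  rcases le_total a b with h | h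
  · obtain ⟨c, rfl⟩ := Nat.exists_eq_add_of_le h
    exact ⟨a + c, by omega⟩
  · obtain ⟨c, rfl⟩ := Nat.exists_eq_add_of_le h
    exact ⟨b + c, by omega⟩

theorem Good.upper {k : ℕ} (i : Fin k) {r : ℝ} (h0 : 0 ≤ r) (h1 : r < 1) :
    Good H (fun α β : Fin k → ℕ => (1 + r) / (1 - r) * (if α i = β i then 1 else 0) -
      r ^ ((α i - β i) + (β i - α i))) := by
  have hc : 0 ≤ r * (1 + r) / (1 - r) :=
    div_nonneg (mul_nonneg h0 (by linarith)) (by linarith)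
  have key : Good H (fun α β : Fin k → ℕ => ((-1 : ℝ) ^ α i * (-1) ^ β i) *
      (r * ((-r) ^ α i * (-r) ^ β i) + r * (1 + r) / (1 - r) *
        ∑ m ∈ Finset.range (min (α i) (β i) + 1), vv (-r) (α i - m) * vv (-r) (β i - m))) :=
    (Good.rank fun α : Fin k → ℕ => (-1 : ℝ) ^ α i).mul
      (((Good.const h0).mul (Good.rank fun α : Fin k → ℕ => (-r) ^ α i)).add
        ((Good.const hc).mul (Good.vsum i (vv (-r)))))
  convert key using 3 with α β
  have h := poisson_id (-r) (by linarith) (α i) (β i)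
  rw [sgn_pow_aux (α i) (β i) r]
  have e : (if α i = β i then (1 : ℝ) else 0) =
      ((-1 : ℝ) ^ α i * (-1) ^ β i) * (if α i = β i then (1 : ℝ) else 0) := by
    split_ifs with hh
    · rw [hh, ← mul_pow]; simp
    · simp
  rw [e]
  simp only [sub_neg_eq_add, ← sub_eq_add_neg] at h
  have hd : (-r) * (1 + r) / (1 - r) = - (r * (1 + r) / (1 - r)) := by ring
  rw [hd] at h
  linear_combination (-((-1 : ℝ) ^ α i * (-1) ^ β i)) * h

theorem Good.pow {k : ℕ} (i : Fin k) {r : ℝ} (h0 : 0 ≤ r) (h1 : r < 1) :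
    Good H (fun α β : Fin k → ℕ => r ^ ((α i - β i) + (β i - α i))) := by
  have hc : 0 ≤ (1 - r) / (1 + r) := div_nonneg (by linarith) (by linarith)
  have := (Good.lower (H := H) i h0 h1).add ((Good.const hc).mul (Good.delta i))
  simpa using this

theorem Good.prod {ι κ : Type*} (s : Finset κ) {a : κ → ι → ι → ℝ} (ha : ∀ i, Good H (a i)) :
    Good H (fun α β => ∏ i ∈ s, a i α β) := by
  classical
  induction s using Finset.induction_on with
  | empty => simpa using Good.const (H := H) (ι := ι) zero_le_one
  | insert i s hi ih =>
    simp only [Finset.prod_insert hi]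
    exact (ha i).mul ih

theorem Good.prod_sub {ι κ : Type*} (s : Finset κ) {a b : κ → ι → ι → ℝ} (ha : ∀ i, Good H (a i))
    (hb : ∀ i, Good H (b i)) (hab : ∀ i, Good H (fun α β => a i α β - b i α β)) :
    Good H (fun α β => ∏ i ∈ s, a i α β - ∏ i ∈ s, b i α β) := by
  classical
  induction s using Finset.induction_on with
  | empty => simpa using Good.const (H := H) (ι := ι) le_rfl
  | insert i s hi ih =>
    simp only [Finset.prod_insert hi]
    have := ((ha i).mul ih).add ((hab i).mul (Good.prod s hb))
    convert this using 3
    ring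

theorem prod_delta {k : ℕ} (c : ℝ) (α β : Fin k → ℕ) :
    ∏ i, c * (if α i = β i then (1 : ℝ) else 0) = c ^ k * (if α = β then 1 else 0) := by
  rw [Finset.prod_mul_distrib, Finset.prod_const, Finset.card_univ, Fintype.card_fin]
  congr 1
  split_ifs with h
  · simp [h]
  · obtain ⟨i, hi⟩ := Function.ne_iff.1 h
    exact Finset.prod_eq_zero (Finset.mem_univ i) (if_neg hi)

theorem pos_of_single {k : ℕ} (T : L2 k H →L[ℂ] L2 k H)
    (K : (Fin k → ℕ) → (Fin k → ℕ) → (H →L[ℂ] H)) (hK : PSD K)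
    (h : ∀ (α β : Fin k → ℕ) (x y : H),
      inner ℂ (T (lp.single 2 β x)) (lp.single 2 α y) = inner ℂ (K α β x) y) :
    T.IsPositive := by
  have key : ∀ f : L2 k H, (0 : ℂ) ≤ inner ℂ (T f) f := by
    intro f
    have hs : Filter.Tendsto (fun s : Finset (Fin k → ℕ) => ∑ α ∈ s,
        (lp.single 2 α (f α) : L2 k H)) Filter.atTop (nhds f) :=
      lp.hasSum_single (by norm_num) f
    have ht := ((T.continuous.tendsto f).comp hs).inner (𝕜 := ℂ) hs
    refine ge_of_tendsto ht (Filter.Eventually.of_forall fun s => ?_)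
    have := hK s (fun α => f α)
    simp only [Function.comp, map_sum, inner_sum, sum_inner, h]
    exact this
  rw [ContinuousLinearMap.isPositive_iff_complex]
  intro f
  have := key f
  rw [Complex.le_def] at this
  exact ⟨Complex.ext (by simp) (by simpa using this.2), this.1⟩

theorem single_inner {k : ℕ} (α β : Fin k → ℕ) (x y : H) :
    (inner ℂ (lp.single 2 β x : L2 k H) (lp.single 2 α y) : ℂ) =
      if α = β then inner ℂ x y else 0 := by
  rw [lp.inner_single_right]
  split_ifs with h
  · subst h; simp
  · simp [lp.single_apply, Pi.single_apply, h]

theorem ker_diag {k : ℕ} (X : Fin k → (H →L[ℂ] H)) (α : Fin k → ℕ) (l : List (Fin k)) :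
    Ps X α α l 1 = 1 := by
  induction l with
  | nil => rfl
  | cons i l ih => simp [Ps, ih]

/-- Harnack inequality for the pluriharmonic Poisson kernel: for
`X ∈ D^k(H)⁻` and `r ∈ [0,1)`,
`((1-r)/(1+r))^k • I ≤ 𝒫(R, rX) ≤ ((1+r)/(1-r))^k • I`. -/
theorem stmt_19 (hk : 1 ≤ k) (X : Fin k → (H →L[ℂ] H)) (hX : memClosedPolydisk X)
    (P : ℝ → (L2 k H →L[ℂ] L2 k H))
    (hP : ∀ r ∈ Set.Ico (0 : ℝ) 1, IsPoissonKernel X r (P r)) :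
    ∀ r ∈ Set.Ico (0 : ℝ) 1,
      opLE (((((1 - r) / (1 + r)) ^ k : ℝ) : ℂ) • (1 : L2 k H →L[ℂ] L2 k H)) (P r) ∧
      opLE (P r) (((((1 + r) / (1 - r)) ^ k : ℝ) : ℂ) • (1 : L2 k H →L[ℂ] L2 k H)) := by
  intro r hr
  obtain ⟨h0, h1⟩ := hr
  have hker := ker_psd X hX
  have hPr := hP r ⟨h0, h1⟩
  have hPk : ∀ (α β : Fin k → ℕ) (x y : H),
      inner ℂ (P r (lp.single 2 β x)) (lp.single 2 α y) =
        ((∏ i, r ^ ((α i - β i) + (β i - α i)) : ℝ) : ℂ) *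
          inner ℂ (Ps X α β (List.finRange k) 1 x) y := by
    intro α β x y
    rw [hPr α β x y, Ps_eq X hX.1, List.ofFn_eq_map, List.ofFn_eq_map, Finset.prod_pow_eq_pow_sum]
  have hdel : ∀ (c : ℝ) (α β : Fin k → ℕ) (x y : H),
      inner ℂ (((c : ℂ) • (1 : L2 k H →L[ℂ] L2 k H)) (lp.single 2 β x)) (lp.single 2 α y) =
        ((c * (if α = β then 1 else 0) : ℝ) : ℂ) *
          inner ℂ (Ps X α β (List.finRange k) 1 x) y := by
    intro c α β x y
    rw [ContinuousLinearMap.smul_apply, inner_smul_left, Complex.conj_ofReal,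
      ContinuousLinearMap.one_apply, single_inner]
    split_ifs with h
    · subst h; rw [ker_diag]; simp
    · simp
  have hc : 0 ≤ (1 - r) / (1 + r) := div_nonneg (by linarith) (by linarith)
  have hC : 0 ≤ (1 + r) / (1 - r) := div_nonneg (by linarith) (by linarith)
  constructor
  · have hg := Good.prod_sub (H := H) (Finset.univ : Finset (Fin k))
      (fun i => Good.pow i h0 h1) (fun i => (Good.const hc).mul (Good.delta i))
      (fun i => Good.lower i h0 h1)
    refine pos_of_single _ _ (hg _ hker) ?_
    intro α β x y
    beta_reduce
    rw [ContinuousLinearMap.sub_apply, inner_sub_left, hPk, hdel, prod_delta,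
      ContinuousLinearMap.smul_apply, inner_smul_left, Complex.conj_ofReal, Complex.ofReal_sub,
      sub_mul]
  · have hg := Good.prod_sub (H := H) (Finset.univ : Finset (Fin k))
      (fun i => (Good.const hC).mul (Good.delta i)) (fun i => Good.pow i h0 h1)
      (fun i => Good.upper i h0 h1)
    refine pos_of_single _ _ (hg _ hker) ?_
    intro α β x y
    beta_reduce
    rw [ContinuousLinearMap.sub_apply, inner_sub_left, hPk, hdel, prod_delta,
      ContinuousLinearMap.smul_apply, inner_smul_left, Complex.conj_ofReal, Complex.ofReal_sub,
      sub_mul]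

end
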